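/- Let A : ℝ → Matrix (Fin n) (Fin n) ℝ be RAP and suppose: (H1) x' = A(t)x has an (α,K,P)-exponential dichotomy whose Green kernel G has the RAP-integral property; (H2) f : ℝ × ℝⁿ → ℝⁿ is RAP in t uniformly with respect to x in compact subsets of ℝⁿ, and for every r > 0 there is a constant M(r) < α/(2K) with ‖f(t,x) − f(t,y)‖ ≤ M(r)‖x−y‖ whenever ‖x‖,‖y‖ ≤ r; ξ : ℝ → ℝⁿ is the unique RAP solution of y' = A(t)y + f(t,y); (H3) f(t,·) is twice continuously differentiable with the second-order partial derivatives locally Lipschitz in x uniformly in t, the map t ↦ (∂f/∂x)(t,ξ(t)) is RAP, δ := sup_{t∈ℝ} ‖(∂f/∂x)(t,ξ(t))‖ < α/(4K²), and the Green kernel of the variational system u' = (A(t) + (∂f/∂x)(t,ξ(t)))u also has the RAP-integral property; (H4) g : ℝ × ℝⁿ × [0,ν̄] → ℝⁿ satisfies: g_ν(t,x) := g(t,x,ν) is RAP in t uniformly with respect to (x,ν) in bounded sets, g₀ ≡ 0, for each ν the function g_ν is bounded on ℝ × B[0,r] for every r, there are constants M₁(r,ν) with ‖g_ν(t,x) − g_ν(t,y)‖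 ≤ M₁(r,ν)‖x−y‖ for ‖x‖,‖y‖ ≤ r, and for each fixed r > 0 both ‖g_ν‖_r := sup{‖g_ν(t,x)‖ : t ∈ ℝ, ‖x‖ ≤ r} → 0 and M₁(r,ν) → 0 as ν → 0⁺. Then there exist r > 0 and ν₀ = ν₀(r) > 0 such that for every ν ∈ [0,ν₀] the system x' = A(t)x + f(t,x) + g_ν(t,x) has exactly one RAP solution ψ_ν with sup_{t∈ℝ} ‖ψ_ν(t) − ξ(t)‖ ≤ r. -/

import Mathlib

open MeasureTheory Filter Metric

noncomputable def opNorm {n : ℕ} (A : Matrix (Fin n) (Fin n) ℝ) : ℝ :=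
  ‖LinearMap.toContinuousLinearMap (Matrix.toEuclideanLin A)‖

noncomputable def mulVecE {n : ℕ} (A : Matrix (Fin n) (Fin n) ℝ)
    (v : EuclideanSpace ℝ (Fin n)) : EuclideanSpace ℝ (Fin n) :=
  Matrix.toEuclideanLin A v

noncomputable def clmToMatrix {n : ℕ}
    (L : EuclideanSpace ℝ (Fin n) →L[ℝ] EuclideanSpace ℝ (Fin n)) :
    Matrix (Fin n) (Fin n) ℝ :=
  Matrix.toEuclideanLin.symm (L : EuclideanSpace ℝ (Fin n) →ₗ[ℝ] EuclideanSpace ℝ (Fin n))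

def RelativelyDense (S : Set ℝ) : Prop :=
  ∃ l > 0, ∀ a : ℝ, ∃ τ ∈ S, τ ∈ Set.Icc a (a + l)

def RAP {E : Type*} [NormedAddCommGroup E] (f : ℝ → E) : Prop :=
  (∃ C, ∀ t, ‖f t‖ ≤ C) ∧ UniformContinuous f ∧
  ∀ ε > 0, RelativelyDense
    {τ | Filter.limsup (fun t => ‖f (t + τ) - f t‖) (Filter.cocompact ℝ) < ε}

def RAPUniform {E F : Type*} [NormedAddCommGroup E] [NormedAddCommGroup F]
    (f : ℝ → E → F) (S : Set E) : Prop :=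
  (∃ C, ∀ t, ∀ x ∈ S, ‖f t x‖ ≤ C) ∧
  UniformContinuousOn (fun p : ℝ × E => f p.1 p.2) (Set.univ ×ˢ S) ∧
  ∀ ε > 0, RelativelyDense
    {τ | Filter.limsup (fun t => ⨆ x ∈ S, ‖f (t + τ) x - f t x‖) (Filter.cocompact ℝ) < ε}

def RAPMatrix {n : ℕ} (A : ℝ → Matrix (Fin n) (Fin n) ℝ) : Prop :=
  ∀ i j, RAP (fun t => A t i j)

def IsFundamentalMatrix {n : ℕ} (A Φ : ℝ → Matrix (Fin n) (Fin n) ℝ) : Prop :=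
  Φ 0 = 1 ∧ (∀ t, IsUnit (Φ t)) ∧
  ∀ t i j, HasDerivAt (fun τ => Φ τ i j) ((A t * Φ t) i j) t

def ExpDichotomy {n : ℕ} (Φ : ℝ → Matrix (Fin n) (Fin n) ℝ)
    (α K : ℝ) (P : Matrix (Fin n) (Fin n) ℝ) : Prop :=
  P * P = P ∧
  (∀ t s : ℝ, s ≤ t → opNorm (Φ t * P * (Φ s)⁻¹) ≤ K * Real.exp (-α * (t - s))) ∧
  (∀ t s : ℝ, t < s → opNorm (Φ t * (1 - P) * (Φ s)⁻¹) ≤ K * Real.exp (-α * (s - t)))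

noncomputable def GreenKernel {n : ℕ} (Φ : ℝ → Matrix (Fin n) (Fin n) ℝ)
    (P : Matrix (Fin n) (Fin n) ℝ) (t s : ℝ) : Matrix (Fin n) (Fin n) ℝ :=
  if s ≤ t then Φ t * P * (Φ s)⁻¹ else -(Φ t * (1 - P) * (Φ s)⁻¹)

def RAPIntegralProperty {n : ℕ} (G : ℝ → ℝ → Matrix (Fin n) (Fin n) ℝ) : Prop :=
  ∀ h : ℝ → EuclideanSpace ℝ (Fin n), RAP h →
    RAP (fun t => ∫ s : ℝ, mulVecE (G t s) (h s))

/-!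
By the dichotomy, for bounded continuous `h` the inhomogeneous system `x' = A(t)x + h(t)` has
exactly one bounded solution, the Green integral `t ↦ ∫ G(t,s) h(s) ds`, and its sup norm is at
most `2K/α` times that of `h`. The solutions sought are therefore the fixed points, in the tube of
radius `r` about `ξ`, of the map sending `φ` to the Green integral of `f(·, φ) + g_ν(·, φ)`. As
`ξ` is the Green integral of `f(·, ξ)` and `g_ν` is small with small Lipschitz constant, for small
`ν` this map contracts the tube into itself. Remotely almost periodic functions are closed under
uniform limits, so the contraction principle applies; they are stable under the map because two
remotely almost periodic functions have a relatively dense set of common remote almost periods.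
-/

open scoped BoundedContinuousFunction Ring Topology

section Translation

theorem relativelyDense_iff_exists_abs_sub_le {S : Set ℝ} :
    RelativelyDense S ↔ ∃ C, ∀ a, ∃ τ ∈ S, |τ - a| ≤ C := by
  constructor
  · rintro ⟨l, -, hl⟩
    refine ⟨l, fun a => (hl a).imp fun τ ⟨hτ, hlo, hhi⟩ => ⟨hτ, abs_le.2 ⟨?_, ?_⟩⟩⟩ <;> linarith
  · rintro ⟨C, hC⟩
    refine ⟨2 * |C| + 1, by positivity, fun a => ?_⟩
    obtain ⟨τ, hτ, hτC⟩ := hC (a + |C|)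
    obtain ⟨hlo, hhi⟩ := abs_le.1 (hτC.trans (le_abs_self C))
    exact ⟨τ, hτ, by linarith, by linarith⟩

theorem RelativelyDense.mono {S T : Set ℝ} (hS : RelativelyDense S) (hST : S ⊆ T) :
    RelativelyDense T :=
  hS.imp fun _ => And.imp_right fun h a => (h a).imp fun _ => And.imp_left (@hST _)

/-- A family `ε ↦ T ε` of subsets of `ℝ` with the two properties that make the sets of
`ε`-almost periods of a function (in whatever sense) interact well with one another. -/
structure IsTranslationFamily (T : ℝ → Set ℝ) : Prop where
  relativelyDense : ∀ ε > 0, RelativelyDense (T ε)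
  sub_mem : ∀ {a b τ σ : ℝ}, τ ∈ T a → σ ∈ T b → τ - σ ∈ T (a + b)

theorem exists_finite_forall_abs_sub_lt {u : ℝ → ℝ} {C d : ℝ} (hu : ∀ a, |u a| ≤ C)
    (hd : 0 < d) : ∃ B : Set ℝ, B.Finite ∧ ∀ a, ∃ b ∈ B, |u a - u b| < d := by
  have hbdd : TotallyBounded (Set.range u) :=
    isCompact_Icc.totallyBounded.subset (Set.range_subset_iff.2 fun a => abs_le.1 (hu a))
  obtain ⟨N, hN, hNfin, hcover⟩ := finite_approx_of_totallyBounded hbdd d hd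
  obtain ⟨B, -, hB, rfl⟩ := Set.exists_subset_image_finite_and.1
    ⟨N, by rwa [Set.image_univ], hNfin, rfl⟩
  refine ⟨B, hB, fun a => ?_⟩
  simpa [Real.dist_eq] using hcover (Set.mem_range_self a)

/-- Near each `a` pick `p a ∈ T₁ (ε₁ / 2)` and `q a ∈ T₂ (ε₂ / 4)`. The offset `p - q` is bounded,
so finitely many `b` approximate all its values; if `b` serves `a`, then `p a - p b` is close to
`q a - q b`, hence lies in both families. -/
theorem IsTranslationFamily.relativelyDense_inter {T₁ T₂ : ℝ → Set ℝ}
    (h₁ : IsTranslationFamily T₁) (h₂ : IsTranslationFamily T₂)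
    (hsmall : ∀ ε > 0, ∃ d > 0, ∀ τ : ℝ, |τ| < d → τ ∈ T₂ ε) {ε₁ ε₂ : ℝ}
    (hε₁ : 0 < ε₁) (hε₂ : 0 < ε₂) : RelativelyDense (T₁ ε₁ ∩ T₂ ε₂) := by
  obtain ⟨C₁, hC₁⟩ := relativelyDense_iff_exists_abs_sub_le.1 (h₁.relativelyDense _ (half_pos hε₁))
  obtain ⟨C₂, hC₂⟩ := relativelyDense_iff_exists_abs_sub_le.1
    (h₂.relativelyDense (ε₂ / 4) (by positivity))
  choose p hp hpC using hC₁
  choose q hq hqC using hC₂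
  obtain ⟨d, hd, hdT⟩ := hsmall _ (half_pos hε₂)
  have hpq : ∀ a, |p a - q a| ≤ C₁ + C₂ := fun a => by
    rw [← sub_sub_sub_cancel_right (p a) (q a) a]
    exact (abs_sub _ _).trans (add_le_add (hpC a) (hqC a))
  obtain ⟨B, hB, hBd⟩ := exists_finite_forall_abs_sub_lt hpq hd
  obtain ⟨D, hD⟩ := (hB.image fun b => |p b|).bddAbove
  refine relativelyDense_iff_exists_abs_sub_le.2 ⟨C₁ + D, fun a => ?_⟩
  obtain ⟨b, hb, hab⟩ := hBd a
  refine ⟨p a - p b, ⟨?_, ?_⟩, ?_⟩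
  · simpa using h₁.sub_mem (hp a) (hp b)
  · have hdiff := h₂.sub_mem (h₂.sub_mem (hq a) (hq b)) (hdT _ ((abs_sub_comm _ _).trans_lt hab))
    have hε : ε₂ / 4 + ε₂ / 4 + ε₂ / 2 = ε₂ := by ring
    rwa [hε, show q a - q b - (p b - q b - (p a - q a)) = p a - p b by ring] at hdiff
  · rw [sub_right_comm]
    exact (abs_sub _ _).trans (add_le_add (hpC a) (hD ⟨b, hb, rfl⟩))

variable {E F : Type*} [NormedAddCommGroup E] [NormedAddCommGroup F]

/-- The remote `ε`-almost periods of `f : ℝ → X → F`, uniformly on `S`. An eventual bound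
replaces the limit superior of `RAPUniform`, which takes junk values on unbounded families. -/
def remotePeriodsOn {X : Type*} (f : ℝ → X → F) (S : Set X) (ε : ℝ) : Set ℝ :=
  {τ | ∀ᶠ t in cocompact ℝ, ∀ x ∈ S, ‖f (t + τ) x - f t x‖ ≤ ε}

/-- The remote `ε`-almost periods of a function `f : ℝ → F`. -/
def remotePeriods (f : ℝ → F) (ε : ℝ) : Set ℝ :=
  {τ | ∀ᶠ t in cocompact ℝ, ‖f (t + τ) - f t‖ ≤ ε}

theorem sub_mem_remotePeriodsOn {X : Type*} {f : ℝ → X → F} {S : Set X} {a b τ σ : ℝ}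
    (hτ : τ ∈ remotePeriodsOn f S a) (hσ : σ ∈ remotePeriodsOn f S b) :
    τ - σ ∈ remotePeriodsOn f S (a + b) := by
  have hshift : Tendsto (fun t : ℝ => t - σ) (cocompact ℝ) (cocompact ℝ) :=
    (Homeomorph.subRight σ).isClosedEmbedding.tendsto_cocompact
  filter_upwards [hshift.eventually hτ, hshift.eventually hσ] with t htτ htσ x hx
  have hτx := htτ x hx
  have hσx := htσ x hx
  rw [sub_add_cancel, norm_sub_rev] at hσx
  rw [sub_add_eq_add_sub, ← add_sub_assoc'] at hτx
  exact (norm_sub_le_norm_sub_add_norm_sub _ _ _).trans (add_le_add hτx hσx)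

theorem sub_mem_remotePeriods {f : ℝ → F} {a b τ σ : ℝ}
    (hτ : τ ∈ remotePeriods f a) (hσ : σ ∈ remotePeriods f b) :
    τ - σ ∈ remotePeriods f (a + b) := by
  have hunit : ∀ c, remotePeriods f c = remotePeriodsOn (fun t (_ : Unit) => f t) Set.univ c :=
    fun c => by simp [remotePeriods, remotePeriodsOn]
  rw [hunit] at *
  exact sub_mem_remotePeriodsOn hτ hσ

theorem RAP.isTranslationFamily {f : ℝ → F} (hf : RAP f) :
    IsTranslationFamily (remotePeriods f) where
  relativelyDense ε hε := by
    obtain ⟨⟨C, hC⟩, -, hdense⟩ := hf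
    refine (hdense ε hε).mono fun τ hτ => ?_
    have hbdd : IsBoundedUnder (· ≤ ·) (cocompact ℝ) fun t => ‖f (t + τ) - f t‖ :=
      isBoundedUnder_of ⟨C + C, fun t => norm_sub_le_of_le (hC _) (hC _)⟩
    have hlim : limsup (fun t => ‖f (t + τ) - f t‖) (cocompact ℝ) < ε := hτ
    exact (eventually_lt_of_limsup_lt hlim hbdd).mono fun _ => le_of_lt
  sub_mem hτ hσ := sub_mem_remotePeriods hτ hσ

theorem RAPUniform.isTranslationFamily {f : ℝ → E → F} {S : Set E} (hf : RAPUniform f S) :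
    IsTranslationFamily (remotePeriodsOn f S) where
  relativelyDense ε hε := by
    obtain ⟨⟨C, hC⟩, -, hdense⟩ := hf
    refine (hdense ε hε).mono fun τ hτ => ?_
    have hle : ∀ t x, ⨆ _ : x ∈ S, ‖f (t + τ) x - f t x‖ ≤ |C| + |C| := fun t x =>
      Real.iSup_le (fun hx => norm_sub_le_of_le ((hC _ x hx).trans (le_abs_self C))
        ((hC _ x hx).trans (le_abs_self C))) (by positivity)
    have hbdd : IsBoundedUnder (· ≤ ·) (cocompact ℝ) fun t => ⨆ x ∈ S, ‖f (t + τ) x - f t x‖ :=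
      isBoundedUnder_of ⟨|C| + |C|, fun t => Real.iSup_le (hle t) (by positivity)⟩
    have hlim : limsup (fun t => ⨆ x ∈ S, ‖f (t + τ) x - f t x‖) (cocompact ℝ) < ε := hτ
    filter_upwards [eventually_lt_of_limsup_lt hlim hbdd] with t ht x hx
    calc ‖f (t + τ) x - f t x‖ = ⨆ _ : x ∈ S, ‖f (t + τ) x - f t x‖ := by simp [hx]
      _ ≤ ⨆ x ∈ S, ‖f (t + τ) x - f t x‖ :=
        le_ciSup (f := fun x => ⨆ _ : x ∈ S, ‖f (t + τ) x - f t x‖)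
          ⟨|C| + |C|, Set.forall_mem_range.2 (hle t)⟩ x
      _ ≤ ε := ht.le
  sub_mem hτ hσ := sub_mem_remotePeriodsOn hτ hσ

end Translation

section RemotelyAlmostPeriodic

variable {E F : Type*} [NormedAddCommGroup E] [NormedAddCommGroup F]

theorem RAP.of_relativelyDense_remotePeriods {f : ℝ → F} (hbdd : ∃ C, ∀ t, ‖f t‖ ≤ C)
    (hcont : UniformContinuous f) (hdense : ∀ ε > 0, RelativelyDense (remotePeriods f ε)) :
    RAP f := by
  refine ⟨hbdd, hcont, fun ε hε => (hdense (ε / 2) (half_pos hε)).mono fun τ hτ => ?_⟩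
  have hlim : limsup (fun t => ‖f (t + τ) - f t‖) (cocompact ℝ) ≤ ε / 2 :=
    limsup_le_of_le (isCoboundedUnder_le_of_le _ fun _ => norm_nonneg _) hτ
  exact hlim.trans_lt (half_lt_self hε)

theorem RAP.continuous {f : ℝ → F} (hf : RAP f) : Continuous f :=
  hf.2.1.continuous

theorem RAP.exists_forall_abs_lt_mem_remotePeriods {f : ℝ → F} (hf : RAP f) (ε : ℝ) (hε : ε > 0) :
    ∃ d > 0, ∀ τ : ℝ, |τ| < d → τ ∈ remotePeriods f ε := by
  obtain ⟨d, hd, hfd⟩ := Metric.uniformContinuous_iff.1 hf.2.1 ε hε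
  refine ⟨d, hd, fun τ hτ => Eventually.of_forall fun t => ?_⟩
  rw [← dist_eq_norm]
  exact (hfd (by simpa using hτ)).le

theorem RAP.lipschitz_comp {u : E → F} {L : NNReal} (hu : LipschitzWith L u) {f : ℝ → E}
    (hf : RAP f) : RAP (fun t => u (f t)) := by
  refine .of_relativelyDense_remotePeriods ?_ (hu.uniformContinuous.comp hf.2.1) fun ε hε => ?_
  · obtain ⟨C, hC⟩ := hf.1
    refine ⟨L * C + ‖u 0‖, fun t => (norm_le_norm_sub_add _ (u 0)).trans ?_⟩
    gcongr
    simpa using (hu.norm_sub_le (f t) 0).trans (by gcongr; simpa using hC t)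
  · refine (hf.isTranslationFamily.relativelyDense (ε / (L + 1)) (by positivity)).mono ?_
    refine fun τ hτ => Eventually.mono hτ fun t ht => (hu.norm_sub_le _ _).trans ?_
    calc L * ‖f (t + τ) - f t‖ ≤ (L + 1) * (ε / (L + 1)) := by gcongr; simp
      _ = ε := by field_simp

theorem RAP.add {f g : ℝ → F} (hf : RAP f) (hg : RAP g) : RAP (fun t => f t + g t) := by
  refine .of_relativelyDense_remotePeriods ?_ (hf.2.1.add hg.2.1) fun ε hε => ?_
  · obtain ⟨C, hC⟩ := hf.1
    obtain ⟨D, hD⟩ := hg.1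
    exact ⟨C + D, fun t => norm_add_le_of_le (hC t) (hD t)⟩
  · refine (hf.isTranslationFamily.relativelyDense_inter hg.isTranslationFamily
      hg.exists_forall_abs_lt_mem_remotePeriods (half_pos hε) (half_pos hε)).mono ?_
    rintro τ ⟨hτf, hτg⟩
    filter_upwards [hτf, hτg] with t htf htg
    rw [add_sub_add_comm, ← add_halves ε]
    exact norm_add_le_of_le htf htg

theorem RAPUniform.rap_comp {f : ℝ → E → F} {S : Set E} (hf : RAPUniform f S) {φ : ℝ → E}
    (hφ : RAP φ) (hS : ∀ t, φ t ∈ S) : RAP (fun t => f t (φ t)) := by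
  refine .of_relativelyDense_remotePeriods ?_ ?_ fun ε hε => ?_
  · obtain ⟨C, hC⟩ := hf.1
    exact ⟨C, fun t => hC t _ (hS t)⟩
  · exact uniformContinuousOn_univ.1 <| hf.2.1.comp
      (uniformContinuous_id.prodMk hφ.2.1).uniformContinuousOn fun t _ => ⟨trivial, hS t⟩
  · obtain ⟨d, hd, hfd⟩ := Metric.uniformContinuousOn_iff.1 hf.2.1 (ε / 2) (half_pos hε)
    refine (hf.isTranslationFamily.relativelyDense_inter hφ.isTranslationFamily
      hφ.exists_forall_abs_lt_mem_remotePeriods (half_pos hε) (half_pos hd)).mono ?_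
    rintro τ ⟨hτf, hτφ⟩
    filter_upwards [hτf, hτφ] with t htf htφ
    have hdist : dist (t, φ (t + τ)) (t, φ t) < d := by
      rw [Prod.dist_eq, dist_self, dist_eq_norm]
      exact max_lt hd (htφ.trans_lt (half_lt_self hd))
    have hspace := (hfd (t, φ (t + τ)) ⟨trivial, hS _⟩ (t, φ t) ⟨trivial, hS t⟩ hdist).le
    rw [dist_eq_norm] at hspace
    rw [← add_halves ε]
    exact (norm_sub_le_norm_sub_add_norm_sub _ _ _).trans (add_le_add (htf _ (hS _)) hspace)

theorem uniformContinuous_of_forall_exists_norm_sub_le {X : Type*} [PseudoMetricSpace X]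
    {f : X → F} (happ : ∀ ε > 0, ∃ g, UniformContinuous g ∧ ∀ x, ‖f x - g x‖ ≤ ε) :
    UniformContinuous f := by
  refine Metric.uniformContinuous_iff.2 fun ε hε => ?_
  obtain ⟨g, hg, hfg⟩ := happ (ε / 4) (by positivity)
  obtain ⟨d, hd, hgd⟩ := Metric.uniformContinuous_iff.1 hg (ε / 4) (by positivity)
  refine ⟨d, hd, fun {x y} hxy => ?_⟩
  have hx := hfg x
  have hy := hfg y
  rw [← dist_eq_norm] at hx hy
  rw [dist_comm] at hy
  linarith [dist_triangle4 (f x) (g x) (g y) (f y), hgd hxy]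

theorem RAP.of_forall_exists_norm_sub_le {f : ℝ → F}
    (happ : ∀ ε > 0, ∃ g, RAP g ∧ ∀ t, ‖f t - g t‖ ≤ ε) : RAP f := by
  refine .of_relativelyDense_remotePeriods ?_ ?_ fun ε hε => ?_
  · obtain ⟨g, hg, hfg⟩ := happ 1 one_pos
    obtain ⟨C, hC⟩ := hg.1
    exact ⟨1 + C, fun t => (norm_le_norm_sub_add _ (g t)).trans (add_le_add (hfg t) (hC t))⟩
  · exact uniformContinuous_of_forall_exists_norm_sub_le fun ε hε =>
      (happ ε hε).imp fun _ => And.imp_left fun hg => hg.2.1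
  · obtain ⟨g, hg, hfg⟩ := happ (ε / 4) (by positivity)
    refine (hg.isTranslationFamily.relativelyDense (ε / 4) (by positivity)).mono fun τ hτ => ?_
    filter_upwards [hτ] with t ht
    have hright := hfg (t + τ)
    have hleft := hfg t
    rw [← dist_eq_norm] at *
    rw [dist_comm] at hleft
    linarith [dist_triangle4 (f (t + τ)) (g (t + τ)) (g t) (f t)]

/-- A remotely almost periodic function as an element of the Banach space in which the contraction
principle is applied. -/
noncomputable def RAP.toBCF {f : ℝ → F} (hf : RAP f) : ℝ →ᵇ F :=
  .ofNormedAddCommGroup f hf.continuous hf.1.choose hf.1.choose_spec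

theorem isClosed_setOf_rap : IsClosed {φ : ℝ →ᵇ F | RAP φ} := by
  refine isClosed_of_closure_subset fun φ hφ => RAP.of_forall_exists_norm_sub_le fun ε hε => ?_
  obtain ⟨g, hg, hφg⟩ := Metric.mem_closure_iff.1 hφ ε hε
  refine ⟨g, hg, fun t => ?_⟩
  rw [← dist_eq_norm]
  exact (BoundedContinuousFunction.dist_coe_le_dist t).trans hφg.le

/-- The remotely almost periodic functions that stay within distance `r` of `ξ`. -/
def rapTube (ξ : ℝ → E) (r : ℝ) : Set (ℝ → E) :=
  {φ | RAP φ ∧ ∀ t, ‖φ t - ξ t‖ ≤ r}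

theorem isClosed_setOf_mem_rapTube (ξ : ℝ → E) (r : ℝ) :
    IsClosed {φ : ℝ →ᵇ E | ⇑φ ∈ rapTube ξ r} := by
  have hnear : IsClosed {φ : ℝ →ᵇ E | ∀ t, ‖φ t - ξ t‖ ≤ r} := by
    rw [Set.ofPred_forall]
    exact isClosed_iInter fun t => isClosed_le (by fun_prop) continuous_const
  exact isClosed_setOf_rap.inter hnear

theorem existsUnique_isFixedPt_mem_rapTube [CompleteSpace E] {ξ : ℝ → E} {r : ℝ}
    (hne : (rapTube ξ r).Nonempty) {T : (ℝ → E) → ℝ → E}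
    (hT : Set.MapsTo T (rapTube ξ r) (rapTube ξ r)) {q : ℝ} (hq₀ : 0 ≤ q) (hq₁ : q < 1)
    (hcontr : ∀ φ ∈ rapTube ξ r, ∀ ψ ∈ rapTube ξ r, ∀ d, (∀ t, ‖φ t - ψ t‖ ≤ d) →
      ∀ t, ‖T φ t - T ψ t‖ ≤ q * d) :
    ∃! ψ, ψ ∈ rapTube ξ r ∧ T ψ = ψ := by
  let X : Set (ℝ →ᵇ E) := {φ | ⇑φ ∈ rapTube ξ r}
  let toX (φ : ℝ → E) (hφ : φ ∈ rapTube ξ r) : X := ⟨hφ.1.toBCF, hφ⟩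
  let TX : X → X := fun φ => toX (T φ) (hT φ.2)
  have : CompleteSpace X := (isClosed_setOf_mem_rapTube ξ r).completeSpace_coe
  have : Nonempty X := hne.elim fun φ hφ => ⟨toX φ hφ⟩
  have hTX : ContractingWith ⟨q, hq₀⟩ TX := by
    refine ⟨hq₁, LipschitzWith.of_dist_le_mul fun φ ψ => ?_⟩
    refine (BoundedContinuousFunction.dist_le (by positivity)).2 fun t => ?_
    rw [dist_eq_norm]
    refine hcontr φ φ.2 ψ ψ.2 _ (fun s => ?_) t
    rw [← dist_eq_norm]
    exact BoundedContinuousFunction.dist_coe_le_dist s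
  let φ₀ : X := ContractingWith.fixedPoint TX hTX
  have hfix : TX φ₀ = φ₀ := hTX.fixedPoint_isFixedPt
  refine ⟨φ₀, ⟨φ₀.2, congrArg (fun φ : X => ⇑φ.1) hfix⟩, ?_⟩
  rintro ψ ⟨hψ, hTψ⟩
  have hψfix : TX (toX ψ hψ) = toX ψ hψ := Subtype.ext (DFunLike.coe_injective hTψ)
  exact congrArg (fun φ : X => ⇑φ.1) (hTX.fixedPoint_unique hψfix)

end RemotelyAlmostPeriodic

section Dichotomy

theorem hasDerivAt_ringInverse_of_mul {R : Type*} [NormedRing R] [NormedAlgebra ℝ R]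
    [HasSummableGeomSeries R] {U : ℝ → R} {a : R} {t : ℝ} (hU : HasDerivAt U (a * U t) t)
    (hunit : IsUnit (U t)) : HasDerivAt (fun s => (U s)⁻¹ʳ) (-((U t)⁻¹ʳ * a)) t := by
  obtain ⟨u, hu⟩ := hunit
  have hinv := hasFDerivAt_ringInverse (𝕜 := ℝ) u
  rw [hu] at hinv
  exact (hinv.comp_hasDerivAt t hU).congr_deriv (by simp [← hu, mul_assoc])

theorem integral_exp_neg_mul_abs_sub {α : ℝ} (hα : 0 < α) (t : ℝ) :
    ∫ s, Real.exp (-α * |t - s|) = 2 / α := by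
  rw [integral_sub_left_eq_self (fun s => Real.exp (-α * |s|)) volume t,
    integral_comp_abs (f := fun s => Real.exp (-α * s)), integral_exp_mul_Ioi (neg_lt_zero.2 hα)]
  simp [div_eq_mul_inv]

theorem integrable_exp_neg_mul_abs_sub {α : ℝ} (hα : 0 < α) (t : ℝ) :
    Integrable fun s => Real.exp (-α * |t - s|) :=
  .of_integral_ne_zero (by rw [integral_exp_neg_mul_abs_sub hα]; positivity)

variable {E : Type*} [NormedAddCommGroup E] [NormedSpace ℝ E]
  {A U : ℝ → E →L[ℝ] E} {P : E →L[ℝ] E} {α K : ℝ}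

/-- An exponential dichotomy with projection `P`, exponent `α` and constant `K` of the equation
`x' = A t x`, with respect to an operator solution `U` of it. No normalization `U 0 = 1` is
imposed. -/
structure OperatorDichotomy (A U : ℝ → E →L[ℝ] E) (P : E →L[ℝ] E) (α K : ℝ) : Prop where
  pos : 0 < α
  isIdempotentElem : IsIdempotentElem P
  isUnit : ∀ t, IsUnit (U t)
  hasDerivAt : ∀ t, HasDerivAt U (A t * U t) t
  norm_stable_le : ∀ t s, s ≤ t → ‖U t * P * (U s)⁻¹ʳ‖ ≤ K * Real.exp (-α * (t - s))
  norm_unstable_le : ∀ t s, t < s → ‖U t * (1 - P) * (U s)⁻¹ʳ‖ ≤ K * Real.exp (-α * (s - t))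

/-- The Green kernel of an exponential dichotomy. -/
noncomputable def greenOperator (U : ℝ → E →L[ℝ] E) (P : E →L[ℝ] E) (t s : ℝ) : E →L[ℝ] E :=
  if s ≤ t then U t * P * (U s)⁻¹ʳ else -(U t * (1 - P) * (U s)⁻¹ʳ)

/-- The Green integral of `h`, which for bounded continuous `h` is the only candidate for a bounded
solution of `x' = A t x + h t`. -/
noncomputable def greenIntegral (U : ℝ → E →L[ℝ] E) (P : E →L[ℝ] E) (h : ℝ → E) (t : ℝ) : E :=
  ∫ s, greenOperator U P t s (h s)

namespace OperatorDichotomy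

theorem norm_greenOperator_le (D : OperatorDichotomy A U P α K) (t s : ℝ) :
    ‖greenOperator U P t s‖ ≤ K * Real.exp (-α * |t - s|) := by
  unfold greenOperator
  split_ifs with hst
  · rw [abs_of_nonneg (sub_nonneg.2 hst)]
    exact D.norm_stable_le t s hst
  · rw [norm_neg, abs_sub_comm, abs_of_pos (sub_pos.2 (not_le.1 hst))]
    exact D.norm_unstable_le t s (not_le.1 hst)

theorem nonneg (D : OperatorDichotomy A U P α K) : 0 ≤ K := by
  simpa using (norm_nonneg _).trans (D.norm_stable_le 0 0 le_rfl)

theorem norm_greenOperator_apply_le (D : OperatorDichotomy A U P α K) (t s : ℝ) {v : E} {C : ℝ}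
    (hv : ‖v‖ ≤ C) : ‖greenOperator U P t s v‖ ≤ K * C * Real.exp (-α * |t - s|) := by
  rw [mul_right_comm]
  exact (greenOperator U P t s).le_of_opNorm_le_of_le (D.norm_greenOperator_le t s) hv

theorem norm_greenIntegral_le (D : OperatorDichotomy A U P α K) {h : ℝ → E} {C : ℝ}
    (hC : ∀ s, ‖h s‖ ≤ C) (t : ℝ) : ‖greenIntegral U P h t‖ ≤ 2 * K / α * C := by
  calc ‖greenIntegral U P h t‖ ≤ ∫ s, K * C * Real.exp (-α * |t - s|) :=
        norm_integral_le_of_norm_le ((integrable_exp_neg_mul_abs_sub D.pos t).const_mul _)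
          (.of_forall fun s => D.norm_greenOperator_apply_le t s (hC s))
    _ = 2 * K / α * C := by
        rw [integral_const_mul, integral_exp_neg_mul_abs_sub D.pos]
        ring

theorem inverse_mul_greenOperator (D : OperatorDichotomy A U P α K) (t s : ℝ) :
    (U t)⁻¹ʳ * greenOperator U P t s = if s ≤ t then P * (U s)⁻¹ʳ else (P - 1) * (U s)⁻¹ʳ := by
  unfold greenOperator
  split_ifs
  · rw [mul_assoc, Ring.inverse_mul_cancel_left _ _ (D.isUnit t)]
  · rw [mul_assoc, mul_neg, Ring.inverse_mul_cancel_left _ _ (D.isUnit t), ← neg_mul, neg_sub]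

theorem inverse_mul_greenOperator_sub (D : OperatorDichotomy A U P α K) (a t s : ℝ) :
    (U t)⁻¹ʳ * greenOperator U P t s - (U a)⁻¹ʳ * greenOperator U P a s =
      (Set.Ioc a t).indicator (fun s => (U s)⁻¹ʳ) s -
        (Set.Ioc t a).indicator (fun s => (U s)⁻¹ʳ) s := by
  simp only [D.inverse_mul_greenOperator, Set.indicator, Set.mem_Ioc, sub_mul, one_mul, ← not_le]
  by_cases ht : s ≤ t <;> by_cases ha : s ≤ a <;> simp [ht, ha]

variable [CompleteSpace E]

theorem hasDerivAt_inverse (D : OperatorDichotomy A U P α K) (t : ℝ) :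
    HasDerivAt (fun s => (U s)⁻¹ʳ) (-((U t)⁻¹ʳ * A t)) t :=
  hasDerivAt_ringInverse_of_mul (D.hasDerivAt t) (D.isUnit t)

theorem continuous_inverse (D : OperatorDichotomy A U P α K) : Continuous fun s => (U s)⁻¹ʳ :=
  continuous_iff_continuousAt.2 fun t => (D.hasDerivAt_inverse t).continuousAt

theorem integrable_greenOperator_apply (D : OperatorDichotomy A U P α K) (h : ℝ →ᵇ E) (t : ℝ) :
    Integrable fun s => greenOperator U P t s (h s) := by
  have hcont (Q : E →L[ℝ] E) : Continuous fun s => U t * Q * (U s)⁻¹ʳ :=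
    continuous_const.mul D.continuous_inverse
  have hgreen : StronglyMeasurable (greenOperator U P t) :=
    .ite measurableSet_Iic (hcont P).stronglyMeasurable (hcont (1 - P)).neg.stronglyMeasurable
  have hmeas : StronglyMeasurable fun s => greenOperator U P t s (h s) :=
    isBoundedBilinearMap_apply.continuous.comp_stronglyMeasurable
      (hgreen.prodMk h.continuous.stronglyMeasurable)
  exact ((integrable_exp_neg_mul_abs_sub D.pos t).const_mul (K * ‖h‖)).mono'
    hmeas.aestronglyMeasurable
    (.of_forall fun s => D.norm_greenOperator_apply_le t s (h.norm_coe_le_norm s))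

theorem norm_greenIntegral_sub_le (D : OperatorDichotomy A U P α K) (h k : ℝ →ᵇ E) {C : ℝ}
    (hC : ∀ s, ‖h s - k s‖ ≤ C) (t : ℝ) :
    ‖greenIntegral U P h t - greenIntegral U P k t‖ ≤ 2 * K / α * C := by
  have hsub : greenIntegral U P h t - greenIntegral U P k t =
      greenIntegral U P (fun s => h s - k s) t := by
    simp only [greenIntegral, map_sub]
    exact (integral_sub (D.integrable_greenOperator_apply h t)
      (D.integrable_greenOperator_apply k t)).symm
  rw [hsub]
  exact D.norm_greenIntegral_le hC t

theorem inverse_apply_eq_of_hasDerivAt (D : OperatorDichotomy A U P α K) {w : ℝ → E}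
    (hw : ∀ t, HasDerivAt w (A t (w t)) t) (s t : ℝ) : (U s)⁻¹ʳ (w s) = (U t)⁻¹ʳ (w t) := by
  have hderiv (τ : ℝ) : HasDerivAt (fun τ => (U τ)⁻¹ʳ (w τ)) 0 τ := by
    simpa using (D.hasDerivAt_inverse τ).clm_apply (hw τ)
  exact is_const_of_deriv_eq_zero (fun τ => (hderiv τ).differentiableAt)
    (fun τ => (hderiv τ).deriv) s t

theorem eq_greenOperator_sub_greenOperator (D : OperatorDichotomy A U P α K) {w : ℝ → E}
    (hw : ∀ t, HasDerivAt w (A t (w t)) t) {s t s' : ℝ} (hst : s ≤ t) (hts' : t < s') :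
    w t = greenOperator U P t s (w s) - greenOperator U P t s' (w s') := by
  have hUt : U t ((U t)⁻¹ʳ (w t)) = w t :=
    congrArg (fun L : E →L[ℝ] E => L (w t)) (Ring.mul_inverse_cancel _ (D.isUnit t))
  simp only [greenOperator, if_pos hst, if_neg hts'.not_ge, neg_apply, sub_neg_eq_add,
    mul_apply_eq_comp, D.inverse_apply_eq_of_hasDerivAt hw _ t]
  rw [← map_add, ← add_apply, add_sub_cancel, one_apply_eq_self, hUt]

theorem eq_zero_of_hasDerivAt (D : OperatorDichotomy A U P α K) {w : ℝ → E}
    (hw : ∀ t, HasDerivAt w (A t (w t)) t) {C : ℝ} (hC : ∀ t, ‖w t‖ ≤ C) (t : ℝ) : w t = 0 := by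
  have hdecay : ∀ σ > 0, ‖w t‖ ≤ 2 * (K * C) * Real.exp (-α * σ) := fun σ hσ => by
    rw [D.eq_greenOperator_sub_greenOperator hw (sub_le_self t hσ.le) (lt_add_of_pos_right t hσ)]
    refine (norm_sub_le_of_le (D.norm_greenOperator_apply_le t (t - σ) (hC _))
      (D.norm_greenOperator_apply_le t (t + σ) (hC _))).trans_eq ?_
    rw [sub_sub_cancel, sub_add_cancel_left, abs_neg, abs_of_pos hσ]
    ring
  have hexp : Tendsto (fun σ => 2 * (K * C) * Real.exp (-α * σ)) atTop (𝓝 0) := by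
    simpa using (Real.tendsto_exp_atBot.comp
      (tendsto_id.const_mul_atTop_of_neg (neg_lt_zero.2 D.pos))).const_mul (2 * (K * C))
  exact norm_le_zero_iff.1 (ge_of_tendsto hexp ((eventually_gt_atTop 0).mono hdecay))

theorem inverse_greenIntegral_sub (D : OperatorDichotomy A U P α K) (h : ℝ →ᵇ E) (a t : ℝ) :
    (U t)⁻¹ʳ (greenIntegral U P h t) - (U a)⁻¹ʳ (greenIntegral U P h a) =
      ∫ s in a..t, (U s)⁻¹ʳ (h s) := by
  have hpull (τ : ℝ) : (U τ)⁻¹ʳ (greenIntegral U P h τ) =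
      ∫ s, ((U τ)⁻¹ʳ * greenOperator U P τ s) (h s) :=
    ((U τ)⁻¹ʳ.integral_comp_comm (D.integrable_greenOperator_apply h τ)).symm
  have hint (τ : ℝ) : Integrable fun s => ((U τ)⁻¹ʳ * greenOperator U P τ s) (h s) :=
    (U τ)⁻¹ʳ.integrable_comp (D.integrable_greenOperator_apply h τ)
  have hcont : Continuous fun s => (U s)⁻¹ʳ (h s) := D.continuous_inverse.clm_apply h.continuous
  have hind (b c : ℝ) : Integrable ((Set.Ioc b c).indicator fun s => (U s)⁻¹ʳ (h s)) :=
    (integrable_indicator_iff measurableSet_Ioc).2 (hcont.intervalIntegrable b c).1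
  rw [hpull, hpull, ← integral_sub (hint t) (hint a), intervalIntegral,
    ← integral_indicator measurableSet_Ioc, ← integral_indicator measurableSet_Ioc,
    ← integral_sub (hind a t) (hind t a)]
  congr 1 with s
  rw [← sub_apply, D.inverse_mul_greenOperator_sub, sub_apply]
  simp only [Set.indicator]
  split_ifs <;> rfl

theorem hasDerivAt_greenIntegral (D : OperatorDichotomy A U P α K) (h : ℝ →ᵇ E) (t : ℝ) :
    HasDerivAt (greenIntegral U P h) (A t (greenIntegral U P h t) + h t) t := by
  have hUU (τ : ℝ) (v : E) : U τ ((U τ)⁻¹ʳ v) = v :=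
    congrArg (fun L : E →L[ℝ] E => L v) (Ring.mul_inverse_cancel _ (D.isUnit τ))
  have hcont : Continuous fun s => (U s)⁻¹ʳ (h s) := D.continuous_inverse.clm_apply h.continuous
  have hvar : greenIntegral U P h = fun τ =>
      U τ ((U t)⁻¹ʳ (greenIntegral U P h t) + ∫ s in t..τ, (U s)⁻¹ʳ (h s)) := by
    funext τ
    rw [← D.inverse_greenIntegral_sub, add_sub_cancel, hUU]
  have hint : HasDerivAt (fun τ => (U t)⁻¹ʳ (greenIntegral U P h t) + ∫ s in t..τ, (U s)⁻¹ʳ (h s))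
      ((U t)⁻¹ʳ (h t)) t := (hcont.integral_hasStrictDerivAt t t).hasDerivAt.const_add _
  have hprod := (D.hasDerivAt t).clm_apply hint
  rw [← hvar] at hprod
  simpa [hUU] using hprod

theorem forall_hasDerivAt_iff_greenIntegral_eq (D : OperatorDichotomy A U P α K) (h : ℝ →ᵇ E)
    {x : ℝ → E} {C : ℝ} (hC : ∀ t, ‖x t‖ ≤ C) :
    (∀ t, HasDerivAt x (A t (x t) + h t) t) ↔ greenIntegral U P h = x := by
  refine ⟨fun hx => ?_, fun hx t => hx ▸ D.hasDerivAt_greenIntegral h t⟩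
  have hdiff (t : ℝ) : HasDerivAt (fun t => greenIntegral U P h t - x t)
      (A t (greenIntegral U P h t - x t)) t := by
    simpa using (D.hasDerivAt_greenIntegral h t).fun_sub (hx t)
  exact funext fun t => sub_eq_zero.1 <| D.eq_zero_of_hasDerivAt hdiff
    (fun t => norm_sub_le_of_le (D.norm_greenIntegral_le h.norm_coe_le_norm t) (hC t)) t

end OperatorDichotomy

end Dichotomy

section Perturbation

theorem exists_forall_mem_Icc_norm_le_and_lipschitz {E F : Type*} [NormedAddCommGroup E]
    [NormedAddCommGroup F] {g : ℝ → E → ℝ → F} {νbar R m : ℝ} {G L : ℝ → ℝ} (hνbar : 0 < νbar)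
    (hm : 0 < m) (hg0 : ∀ t x, g t x 0 = 0)
    (hG : ∀ ν ∈ Set.Icc 0 νbar, ∀ t x, ‖x‖ ≤ R → ‖g t x ν‖ ≤ G ν)
    (hL : ∀ ν ∈ Set.Icc 0 νbar, ∀ t x y, ‖x‖ ≤ R → ‖y‖ ≤ R →
      ‖g t x ν - g t y ν‖ ≤ L ν * ‖x - y‖)
    (hG0 : Tendsto G (𝓝[>] 0) (𝓝 0)) (hL0 : Tendsto L (𝓝[>] 0) (𝓝 0)) :
    ∃ ν₀ > 0, ν₀ ≤ νbar ∧ ∀ ν ∈ Set.Icc 0 ν₀, (∀ t x, ‖x‖ ≤ R → ‖g t x ν‖ ≤ m) ∧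
      ∀ t x y, ‖x‖ ≤ R → ‖y‖ ≤ R → ‖g t x ν - g t y ν‖ ≤ m * ‖x - y‖ := by
  have hev : ∀ᶠ ν in 𝓝[>] 0, G ν < m ∧ L ν < m :=
    (hG0.eventually_lt_const hm).and (hL0.eventually_lt_const hm)
  obtain ⟨u, hu, hsub⟩ := mem_nhdsGT_iff_exists_Ioc_subset.1 hev
  refine ⟨min u νbar, lt_min hu hνbar, min_le_right _ _, fun ν ⟨hν, hνmin⟩ => ?_⟩
  obtain ⟨hνu, hνbar⟩ := le_min_iff.1 hνmin
  rcases hν.eq_or_lt with rfl | hνpos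
  · simp only [hg0, sub_zero, norm_zero]
    exact ⟨fun _ _ _ => hm.le, fun _ _ _ _ _ => by positivity⟩
  · obtain ⟨hGm, hLm⟩ := hsub ⟨hνpos, hνu⟩
    exact ⟨fun t x hx => (hG ν ⟨hν, hνbar⟩ t x hx).trans hGm.le, fun t x y hx hy =>
      (hL ν ⟨hν, hνbar⟩ t x y hx hy).trans (by gcongr)⟩

theorem exists_contraction_constants {a α K r : ℝ} (hα : 0 < α) (hK : 0 < K) (hr : 0 < r)
    (ha : a < α / (2 * K)) : ∃ κ m, 0 ≤ κ ∧ 0 < m ∧ a + m ≤ κ ∧ 2 * K / α * κ < 1 ∧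
      2 * K / α * (κ * r + m) ≤ r := by
  obtain ⟨q, hq⟩ : ∃ q, q = α / (2 * K) := ⟨_, rfl⟩
  have hqpos : 0 < q := hq ▸ by positivity
  have hqinv : 2 * K / α = q⁻¹ := by rw [hq, inv_div]
  have hgap : 0 < q - max a 0 := sub_pos.2 (max_lt (hq ▸ ha) hqpos)
  -- The choice of `m` makes `κ * r + m = q * r` with `κ = max a 0 + m`.
  obtain ⟨m, hm⟩ : ∃ m, m = (q - max a 0) * r / (r + 1) := ⟨_, rfl⟩
  have hmpos : 0 < m := hm ▸ by positivity
  have hmr : m * (r + 1) = (q - max a 0) * r := by rw [hm, div_mul_cancel₀ _ (by positivity)]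
  refine ⟨max a 0 + m, m, by positivity, hmpos, by gcongr; exact le_max_left _ _, ?_, ?_⟩
  · rw [hqinv, inv_mul_lt_one₀ hqpos]
    nlinarith
  · rw [hqinv, inv_mul_le_iff₀ hqpos]
    linarith

variable {E : Type*} [NormedAddCommGroup E] [NormedSpace ℝ E] [CompleteSpace E]
  {A U : ℝ → E →L[ℝ] E} {P : E →L[ℝ] E} {α K : ℝ}

theorem OperatorDichotomy.existsUnique_rap_of_lipschitz_near (D : OperatorDichotomy A U P α K)
    (hG : ∀ h, RAP h → RAP (greenIntegral U P h)) {ξ h₀ : ℝ → E} (hξ : RAP ξ) (hh₀ : RAP h₀)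
    (hξsol : ∀ t, HasDerivAt ξ (A t (ξ t) + h₀ t) t) {F : ℝ → E → E} {r κ m : ℝ} (hr : 0 ≤ r)
    (hF : ∀ φ ∈ rapTube ξ r, RAP fun t => F t (φ t)) (hκ : 0 ≤ κ)
    (hlip : ∀ t x y, ‖x - ξ t‖ ≤ r → ‖y - ξ t‖ ≤ r → ‖F t x - F t y‖ ≤ κ * ‖x - y‖)
    (hm : ∀ t, ‖F t (ξ t) - h₀ t‖ ≤ m) (hcontr : 2 * K / α * κ < 1)
    (hinv : 2 * K / α * (κ * r + m) ≤ r) :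
    ∃! ψ : ℝ → E, RAP ψ ∧ (∀ t, HasDerivAt ψ (A t (ψ t) + F t (ψ t)) t) ∧
      ∀ t, ‖ψ t - ξ t‖ ≤ r := by
  let T (φ : ℝ → E) : ℝ → E := greenIntegral U P fun t => F t (φ t)
  have hξtube : ξ ∈ rapTube ξ r := ⟨hξ, by simpa⟩
  have hξgreen : greenIntegral U P h₀ = ξ :=
    (D.forall_hasDerivAt_iff_greenIntegral_eq hh₀.toBCF hξ.1.choose_spec).1 hξsol
  have hT : Set.MapsTo T (rapTube ξ r) (rapTube ξ r) := fun φ hφ => by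
    refine ⟨hG _ (hF φ hφ), fun t => ?_⟩
    have hforce (s : ℝ) : ‖F s (φ s) - h₀ s‖ ≤ κ * r + m :=
      (norm_sub_le_norm_sub_add_norm_sub _ (F s (ξ s)) _).trans <| add_le_add
        ((hlip s _ _ (hφ.2 s) (hξtube.2 s)).trans (by gcongr; exact hφ.2 s)) (hm s)
    have hdist := D.norm_greenIntegral_sub_le (hF φ hφ).toBCF hh₀.toBCF hforce t
    exact (hξgreen ▸ hdist).trans hinv
  have hTlip : ∀ φ ∈ rapTube ξ r, ∀ ψ ∈ rapTube ξ r, ∀ d, (∀ t, ‖φ t - ψ t‖ ≤ d) →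
      ∀ t, ‖T φ t - T ψ t‖ ≤ 2 * K / α * κ * d := fun φ hφ ψ hψ d hd t => by
    rw [mul_assoc]
    exact D.norm_greenIntegral_sub_le (hF φ hφ).toBCF (hF ψ hψ).toBCF (fun s =>
      (hlip s _ _ (hφ.2 s) (hψ.2 s)).trans (by gcongr; exact hd s)) t
  have hq : 0 ≤ 2 * K / α * κ :=
    mul_nonneg (div_nonneg (mul_nonneg zero_le_two D.nonneg) D.pos.le) hκ
  refine (existsUnique_congr fun ψ => ?_).1
    (existsUnique_isFixedPt_mem_rapTube ⟨ξ, hξtube⟩ hT hq hcontr hTlip)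
  rw [and_left_comm, and_comm]
  refine and_congr_left fun hψ => ?_
  exact (D.forall_hasDerivAt_iff_greenIntegral_eq (hF ψ hψ).toBCF hψ.1.1.choose_spec).symm

theorem exists_unique_RAP_solution_perturbed_general (D : OperatorDichotomy A U P α K) (hK : 0 < K)
    (hGreen : ∀ h, RAP h → RAP (greenIntegral U P h)) {f : ℝ → E → E} {ξ : ℝ → E}
    {g : ℝ → E → ℝ → E} {νbar : ℝ} {M : ℝ → ℝ} {M₁ GN : ℝ → ℝ → ℝ} (hνbar : 0 < νbar)
    (hfRAP : ∀ R, RAPUniform f (closedBall 0 R)) (hM : ∀ R > 0, M R < α / (2 * K))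
    (hflip : ∀ R > 0, ∀ t x y, ‖x‖ ≤ R → ‖y‖ ≤ R → ‖f t x - f t y‖ ≤ M R * ‖x - y‖)
    (hξRAP : RAP ξ) (hξsol : ∀ t, HasDerivAt ξ (A t (ξ t) + f t (ξ t)) t)
    (hgRAP : ∀ R, RAPUniform (fun t (p : E × ℝ) => g t p.1 p.2) (closedBall 0 R))
    (hg0 : ∀ t x, g t x 0 = 0)
    (hgGN : ∀ R > 0, ∀ ν ∈ Set.Icc 0 νbar, ∀ t x, ‖x‖ ≤ R → ‖g t x ν‖ ≤ GN R ν)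
    (hglip : ∀ R > 0, ∀ ν ∈ Set.Icc 0 νbar, ∀ t x y, ‖x‖ ≤ R → ‖y‖ ≤ R →
      ‖g t x ν - g t y ν‖ ≤ M₁ R ν * ‖x - y‖)
    (hGN0 : ∀ R > 0, Tendsto (GN R) (𝓝[>] 0) (𝓝 0))
    (hM₁0 : ∀ R > 0, Tendsto (M₁ R) (𝓝[>] 0) (𝓝 0)) {r : ℝ} (hr : 0 < r) :
    ∃ ν₀ > 0, ν₀ ≤ νbar ∧ ∀ ν ∈ Set.Icc 0 ν₀, ∃! ψ : ℝ → E, RAP ψ ∧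
      (∀ t, HasDerivAt ψ (A t (ψ t) + f t (ψ t) + g t (ψ t) ν) t) ∧ ∀ t, ‖ψ t - ξ t‖ ≤ r := by
  obtain ⟨C, hC⟩ := hξRAP.1
  obtain ⟨R, hR, hCR⟩ : ∃ R > 0, C + r ≤ R := ⟨max (C + r) 1, by positivity, le_max_left _ _⟩
  have hball {x : E} {t : ℝ} (hx : ‖x - ξ t‖ ≤ r) : ‖x‖ ≤ R :=
    (norm_le_norm_add_norm_sub' x (ξ t)).trans ((add_le_add (hC t) hx).trans hCR)
  obtain ⟨κ, m, hκ, hm, hMκ, hcontr, hinv⟩ := exists_contraction_constants D.pos hK hr (hM R hR)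
  obtain ⟨ν₀, hν₀, hν₀bar, hsmall⟩ := exists_forall_mem_Icc_norm_le_and_lipschitz hνbar hm hg0
    (hgGN R hR) (hglip R hR) (hGN0 R hR) (hM₁0 R hR)
  refine ⟨ν₀, hν₀, hν₀bar, fun ν hν => ?_⟩
  obtain ⟨hgm, hgLip⟩ := hsmall ν hν
  have hfφ : ∀ φ ∈ rapTube ξ r, RAP fun t => f t (φ t) := fun φ hφ =>
    (hfRAP R).rap_comp hφ.1 fun t => mem_closedBall_zero_iff.2 (hball (hφ.2 t))
  have hgφ : ∀ φ ∈ rapTube ξ r, RAP fun t => g t (φ t) ν := fun φ hφ =>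
    (hgRAP (max R ‖ν‖)).rap_comp (hφ.1.lipschitz_comp (LipschitzWith.prodMk_right ν)) fun t =>
      mem_closedBall_zero_iff.2 (max_le_max (hball (hφ.2 t)) le_rfl)
  have hξtube : ξ ∈ rapTube ξ r := ⟨hξRAP, by simpa using hr.le⟩
  have hlip (t : ℝ) (x y : E) (hx : ‖x - ξ t‖ ≤ r) (hy : ‖y - ξ t‖ ≤ r) :
      ‖f t x + g t x ν - (f t y + g t y ν)‖ ≤ κ * ‖x - y‖ :=
    calc ‖f t x + g t x ν - (f t y + g t y ν)‖
        ≤ M R * ‖x - y‖ + m * ‖x - y‖ := by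
          rw [add_sub_add_comm]
          exact norm_add_le_of_le (hflip R hR t x y (hball hx) (hball hy))
            (hgLip t x y (hball hx) (hball hy))
      _ ≤ κ * ‖x - y‖ := by
          rw [← add_mul]
          gcongr
  simpa only [add_assoc] using D.existsUnique_rap_of_lipschitz_near hGreen hξRAP (hfφ ξ hξtube)
    hξsol hr.le (fun φ hφ => (hfφ φ hφ).add (hgφ φ hφ)) hκ hlip
    (fun t => by simpa using hgm t _ (hball (hξtube.2 t))) hcontr hinv

end Perturbation

section Matrix

theorem map_ringInverse {M N F : Type*} [MonoidWithZero M] [MonoidWithZero N] [EquivLike F M N]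
    [MulEquivClass F M N] (e : F) (x : M) : e x⁻¹ʳ = (e x)⁻¹ʳ := by
  by_cases hx : IsUnit x
  · refine (hx.map e).mul_left_cancel ?_
    rw [← map_mul, Ring.mul_inverse_cancel _ hx, map_one, Ring.mul_inverse_cancel _ (hx.map e)]
  · rw [Ring.inverse_non_unit _ hx, map_zero, Ring.inverse_non_unit]
    rwa [MulEquiv.isUnit_map]

variable {n : ℕ} {A Φ : ℝ → Matrix (Fin n) (Fin n) ℝ} {P : Matrix (Fin n) (Fin n) ℝ} {α K : ℝ}

theorem toEuclideanCLM_inv (B : Matrix (Fin n) (Fin n) ℝ) :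
    Matrix.toEuclideanCLM (𝕜 := ℝ) B⁻¹ = (Matrix.toEuclideanCLM (𝕜 := ℝ) B)⁻¹ʳ := by
  rw [Matrix.nonsing_inv_eq_ringInverse, map_ringInverse]

theorem hasDerivAt_toEuclideanCLM {B : Matrix (Fin n) (Fin n) ℝ} {t : ℝ}
    (hΦ : ∀ i j, HasDerivAt (fun τ => Φ τ i j) (B i j) t) :
    HasDerivAt (fun τ => Matrix.toEuclideanCLM (𝕜 := ℝ) (Φ τ))
      (Matrix.toEuclideanCLM (𝕜 := ℝ) B) t := by
  let L : (Fin n → Fin n → ℝ) →ₗ[ℝ] EuclideanSpace ℝ (Fin n) →L[ℝ] EuclideanSpace ℝ (Fin n) :=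
    LinearMap.toContinuousLinearMap.toLinearMap ∘ₗ Matrix.toEuclideanLin.toLinearMap ∘ₗ
      (Matrix.ofLinearEquiv ℝ).toLinearMap
  exact L.toContinuousLinearMap.hasFDerivAt.comp_hasDerivAt t
    (hasDerivAt_pi.2 fun i => hasDerivAt_pi.2 (hΦ i))

theorem ExpDichotomy.operatorDichotomy (hα : 0 < α) (hΦ : IsFundamentalMatrix A Φ)
    (hdich : ExpDichotomy Φ α K P) :
    OperatorDichotomy (fun t => Matrix.toEuclideanCLM (𝕜 := ℝ) (A t))
      (fun t => Matrix.toEuclideanCLM (𝕜 := ℝ) (Φ t)) (Matrix.toEuclideanCLM (𝕜 := ℝ) P) α K where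
  pos := hα
  isIdempotentElem := IsIdempotentElem.map hdich.1 _
  isUnit t := (hΦ.2.1 t).map _
  hasDerivAt t := by
    rw [← map_mul]
    exact hasDerivAt_toEuclideanCLM (hΦ.2.2 t)
  norm_stable_le t s hst := by
    simp only [← toEuclideanCLM_inv, ← map_mul]
    exact hdich.2.1 t s hst
  norm_unstable_le t s hts := by
    rw [← toEuclideanCLM_inv, ← map_one (Matrix.toEuclideanCLM (n := Fin n) (𝕜 := ℝ)), ← map_sub,
      ← map_mul, ← map_mul]
    exact hdich.2.2 t s hts

theorem toEuclideanCLM_greenKernel (Φ : ℝ → Matrix (Fin n) (Fin n) ℝ)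
    (P : Matrix (Fin n) (Fin n) ℝ) (t s : ℝ) :
    Matrix.toEuclideanCLM (𝕜 := ℝ) (GreenKernel Φ P t s) =
      greenOperator (fun t => Matrix.toEuclideanCLM (𝕜 := ℝ) (Φ t))
        (Matrix.toEuclideanCLM (𝕜 := ℝ) P) t s := by
  unfold GreenKernel greenOperator
  split_ifs <;> simp only [map_neg, map_mul, map_sub, map_one, toEuclideanCLM_inv]

theorem RAPIntegralProperty.rap_greenIntegral (hG : RAPIntegralProperty (GreenKernel Φ P))
    {h : ℝ → EuclideanSpace ℝ (Fin n)} (hh : RAP h) :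
    RAP (greenIntegral (fun t => Matrix.toEuclideanCLM (𝕜 := ℝ) (Φ t))
      (Matrix.toEuclideanCLM (𝕜 := ℝ) P) h) := by
  unfold greenIntegral
  simp only [← toEuclideanCLM_greenKernel]
  exact hG h hh

end Matrix

/-- Theorem: existence and uniqueness of a remotely almost periodic
solution of the perturbed system `x' = A(t)x + f(t,x) + g_ν(t,x)` under (H1)-(H4). -/
theorem exists_unique_RAP_solution_perturbed {n : ℕ}
    (A Φ : ℝ → Matrix (Fin n) (Fin n) ℝ)
    (P : Matrix (Fin n) (Fin n) ℝ) (α K : ℝ)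
    (f : ℝ → EuclideanSpace ℝ (Fin n) → EuclideanSpace ℝ (Fin n))
    (ξ : ℝ → EuclideanSpace ℝ (Fin n))
    (g : ℝ → EuclideanSpace ℝ (Fin n) → ℝ → EuclideanSpace ℝ (Fin n))
    (νbar : ℝ) (M : ℝ → ℝ) (M₁ GN : ℝ → ℝ → ℝ)
    (hα : 0 < α) (hK : 1 ≤ K) (hνbar : 0 < νbar)
    -- (H1)
    (hARAP : RAPMatrix A)
    (hΦ : IsFundamentalMatrix A Φ)
    (hdich : ExpDichotomy Φ α K P)
    (hGreen : RAPIntegralProperty (GreenKernel Φ P))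
    -- (H2)
    (hfRAP : ∀ S : Set (EuclideanSpace ℝ (Fin n)), IsCompact S → RAPUniform f S)
    (hM : ∀ r > 0, M r < α / (2 * K))
    (hflip : ∀ r > 0, ∀ t : ℝ, ∀ x y : EuclideanSpace ℝ (Fin n),
      ‖x‖ ≤ r → ‖y‖ ≤ r → ‖f t x - f t y‖ ≤ M r * ‖x - y‖)
    (hξRAP : RAP ξ)
    (hξsol : ∀ t, HasDerivAt ξ (mulVecE (A t) (ξ t) + f t (ξ t)) t)
    (hξuniq : ∀ η : ℝ → EuclideanSpace ℝ (Fin n), RAP η →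
      (∀ t, HasDerivAt η (mulVecE (A t) (η t) + f t (η t)) t) → η = ξ)
    -- (H3)
    (hfC2 : ∀ t, ContDiff ℝ 2 (f t))
    (hf2lip : ∀ r > 0, ∃ L, ∀ t : ℝ, ∀ x y : EuclideanSpace ℝ (Fin n),
      ‖x‖ ≤ r → ‖y‖ ≤ r →
      ‖fderiv ℝ (fderiv ℝ (f t)) x - fderiv ℝ (fderiv ℝ (f t)) y‖ ≤ L * ‖x - y‖)
    (hDfRAP : RAP (fun t => fderiv ℝ (f t) (ξ t)))
    (hDfbdd : BddAbove (Set.range fun t => ‖fderiv ℝ (f t) (ξ t)‖))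
    (δ : ℝ) (hδdef : δ = ⨆ t, ‖fderiv ℝ (f t) (ξ t)‖)
    (hδ : δ < α / (4 * K ^ 2))
    (hvarGreen : ∃ (Ψ : ℝ → Matrix (Fin n) (Fin n) ℝ)
        (Q : Matrix (Fin n) (Fin n) ℝ) (β L : ℝ),
      IsFundamentalMatrix (fun t => A t + clmToMatrix (fderiv ℝ (f t) (ξ t))) Ψ ∧
      ExpDichotomy Ψ β L Q ∧ RAPIntegralProperty (GreenKernel Ψ Q))
    -- (H4)
    (hgRAP : ∀ S : Set (EuclideanSpace ℝ (Fin n) × ℝ), Bornology.IsBounded S →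
      RAPUniform (fun t p => g t p.1 p.2) S)
    (hg0 : ∀ t x, g t x 0 = 0)
    (hgbdd : ∀ ν ∈ Set.Icc (0:ℝ) νbar, ∀ r > 0, ∃ C, ∀ t : ℝ,
      ∀ x : EuclideanSpace ℝ (Fin n), ‖x‖ ≤ r → ‖g t x ν‖ ≤ C)
    (hgGN : ∀ r > 0, ∀ ν ∈ Set.Icc (0:ℝ) νbar, ∀ t : ℝ,
      ∀ x : EuclideanSpace ℝ (Fin n), ‖x‖ ≤ r → ‖g t x ν‖ ≤ GN r ν)
    (hglip : ∀ r > 0, ∀ ν ∈ Set.Icc (0:ℝ) νbar, ∀ t : ℝ,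
      ∀ x y : EuclideanSpace ℝ (Fin n), ‖x‖ ≤ r → ‖y‖ ≤ r →
      ‖g t x ν - g t y ν‖ ≤ M₁ r ν * ‖x - y‖)
    (hGN0 : ∀ r > 0, Filter.Tendsto (GN r) (nhdsWithin 0 (Set.Ioi 0)) (nhds 0))
    (hM₁0 : ∀ r > 0, Filter.Tendsto (M₁ r) (nhdsWithin 0 (Set.Ioi 0)) (nhds 0)) :
    ∃ r > 0, ∃ ν₀ > 0, ν₀ ≤ νbar ∧ ∀ ν ∈ Set.Icc (0:ℝ) ν₀,
      ∃! ψ : ℝ → EuclideanSpace ℝ (Fin n),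
        RAP ψ ∧
        (∀ t, HasDerivAt ψ (mulVecE (A t) (ψ t) + f t (ψ t) + g t (ψ t) ν) t) ∧
        ∀ t, ‖ψ t - ξ t‖ ≤ r := by
  exact ⟨1, one_pos, exists_unique_RAP_solution_perturbed_general
    (hdich.operatorDichotomy hα hΦ) (one_pos.trans_le hK) (fun _ => hGreen.rap_greenIntegral) hνbar
    (fun _ => hfRAP _ (isCompact_closedBall _ _)) hM hflip hξRAP hξsol
    (fun _ => hgRAP _ isBounded_closedBall) hg0 hgGN hglip hGN0 hM₁0 one_pos⟩
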